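/- Let 0 < a ≤ 1/√2 and let k ≥ 2 be an integer. With A_k as defined, det A_k = a_k · a²(1−a²)·((k+1)²/(2k(k+2)) − a²), where a_k := [(1!·2!⋯(k−1)!)² · (2!·3!⋯(k+1)!) / (2^{k−1}·(k+2)!·(k+3)!⋯(2k+1)!)] · k(k+2). -/

import Mathlib

noncomputable section

/-- The entry function `g`: `g(m,0) = (m+2)/(m+1)` for `m ≥ 1`, `g(0,n) = 2` for `n ≥ 1`,
`g(m,n) = 2a²` for `m, n ≥ 1` (the value at `(0,0)` is irrelevant for `A_k`). -/
def gfun (a : ℝ) : ℕ × ℕ → ℝ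
  | (0, 0) => 2
  | (m + 1, 0) => ((m : ℝ) + 3) / ((m : ℝ) + 2)
  | (0, _ + 1) => 2
  | (_ + 1, _ + 1) => 2 * a ^ 2

/-- The enumeration of the index set `S' = {(1,0),(0,1),(1,1),(2,0),(3,0),…,(k,0)}`. -/
def Sidx' : ℕ → ℕ × ℕ
  | 0 => (1, 0)
  | 1 => (0, 1)
  | 2 => (1, 1)
  | i + 3 => (i + 2, 0)

/-- The `(k+2)×(k+2)` matrix `A_k` with entries `(1/2)·g(u+v)` for `u, v ∈ S'`. -/
def Ak (a : ℝ) (k : ℕ) : Matrix (Fin (k + 2)) (Fin (k + 2)) ℝ :=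
  fun i j => (1 / 2) * gfun a (Sidx' (i : ℕ) + Sidx' (j : ℕ))

/-- The constant `a_k`. -/
def akConst (k : ℕ) : ℝ :=
  ((∏ i ∈ Finset.Icc 1 (k - 1), (Nat.factorial i : ℝ)) ^ 2 *
      (∏ i ∈ Finset.Icc 2 (k + 1), (Nat.factorial i : ℝ)) /
      (2 ^ (k - 1) * ∏ i ∈ Finset.Icc (k + 2) (2 * k + 1), (Nat.factorial i : ℝ))) *
    ((k : ℝ) * ((k : ℝ) + 2))

open Polynomial in
/-- A vector solving `C v = 1` for the Cauchy matrix `C i j = 1/(i+j+3)`. -/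
lemma exists_ones_solution (k : ℕ) (hk : 0 < k) :
    ∃ v : Fin k → ℝ, (∀ i : Fin k, ∑ j : Fin k, 1 / ((i : ℝ) + (j : ℝ) + 3) * v j = 1) ∧
      ∑ j, v j = (k : ℝ) * ((k : ℝ) + 2) := by
  classical
  set w : Fin k → ℝ := fun j => -(j : ℝ) with hw
  set x : Fin k → ℝ := fun i => (i : ℝ) + 3 with hx
  set P : ℝ[X] := Lagrange.nodal Finset.univ w - Lagrange.nodal Finset.univ x with hP
  have hinj : Set.InjOn w (Finset.univ : Finset (Fin k)) := by
    intro a _ b _ h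
    simp only [hw, neg_inj, Nat.cast_inj] at h
    exact Fin.ext h
  have hdeg : P.degree < (Finset.univ : Finset (Fin k)).card := by
    have h := degree_sub_lt_left (p := Lagrange.nodal Finset.univ w) (q := Lagrange.nodal Finset.univ x)
      (by rw [Lagrange.degree_nodal, Lagrange.degree_nodal]) Lagrange.nodal_ne_zero
      (by rw [Lagrange.nodal_monic.leadingCoeff, Lagrange.nodal_monic.leadingCoeff])
    rwa [Lagrange.degree_nodal] at h
  have hne : ∀ i j : Fin k, x i ≠ w j := by
    intro i j
    simp only [hx, hw]
    have : (0 : ℝ) ≤ (i : ℕ) := Nat.cast_nonneg _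
    have : (0 : ℝ) ≤ (j : ℕ) := Nat.cast_nonneg _
    intro h
    linarith
  refine ⟨fun j => P.eval (w j) * Lagrange.nodalWeight Finset.univ w j, ?_, ?_⟩
  · intro i
    have h1 := Lagrange.eval_interpolate_not_at_node (s := Finset.univ) (v := w) (x := x i)
      (fun j => P.eval (w j)) (fun j _ => hne i j)
    rw [← Lagrange.eq_interpolate hinj hdeg] at h1
    have h2 : P.eval (x i) = (Lagrange.nodal Finset.univ w).eval (x i) := by
      rw [hP, eval_sub, Lagrange.eval_nodal_at_node (Finset.mem_univ i), sub_zero]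
    have h3 : (Lagrange.nodal Finset.univ w).eval (x i) ≠ 0 :=
      Lagrange.eval_nodal_not_at_node (fun j _ => hne i j)
    rw [h2] at h1
    have h4 := mul_left_cancel₀ h3 (h1.symm.trans (mul_one _).symm)
    refine Eq.trans ?_ h4
    refine Finset.sum_congr rfl fun j _ => ?_
    have : x i - w j = (i : ℝ) + (j : ℝ) + 3 := by simp only [hx, hw]; ring
    rw [this]
    ring
  · have h1 := Lagrange.coeff_eq_sum hinj hdeg
    have h2 : ∑ j, P.eval (w j) * Lagrange.nodalWeight Finset.univ w j
        = P.coeff ((Finset.univ : Finset (Fin k)).card - 1) := by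
      rw [h1]
      refine Finset.sum_congr rfl fun j _ => ?_
      rw [Lagrange.nodalWeight, Finset.prod_inv_distrib, div_eq_mul_inv]
    rw [h2, hP, coeff_sub, Lagrange.nodal, Lagrange.nodal,
      prod_X_sub_C_coeff_card_pred _ _ (by simpa using hk),
      prod_X_sub_C_coeff_card_pred _ _ (by simpa using hk)]
    simp only [hw, hx, Finset.sum_neg_distrib, Finset.sum_add_distrib]
    have h5 : ∀ n : ℕ, ∑ j : Fin n, ((j : ℕ) : ℝ) = (n : ℝ) * ((n : ℝ) - 1) / 2 := by
      intro n
      induction n with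
      | zero => simp
      | succ n ih => rw [Fin.sum_univ_castSucc]; simp [ih]; ring
    rw [h5]
    simp
    ring

/-- Determinant of the shifted Hilbert matrix. -/
lemma det_hilb (n : ℕ) : ∀ c : ℕ,
    (Matrix.of fun i j : Fin n => 1 / ((i : ℝ) + (j : ℝ) + (c : ℝ) + 1)).det =
      (∏ i ∈ Finset.range n, (Nat.factorial i : ℝ)) ^ 2 *
        (∏ i ∈ Finset.range n, (Nat.factorial (i + c) : ℝ)) /
        ∏ i ∈ Finset.range n, (Nat.factorial (i + c + n) : ℝ) := by
  induction n with
  | zero => intro c; simp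
  | succ n ih =>
    intro c
    have pos : ∀ i : ℕ, (0 : ℝ) ≤ i := fun i => Nat.cast_nonneg i
    have fpos : ∀ i : ℕ, (Nat.factorial i : ℝ) ≠ 0 := fun i => by
      exact_mod_cast Nat.factorial_ne_zero i
    set A : Matrix (Fin (n + 1)) (Fin (n + 1)) ℝ :=
      Matrix.of fun i j => 1 / ((i : ℝ) + (j : ℝ) + (c : ℝ) + 1) with hA
    set q : Fin (n + 1) → ℝ := fun i => if i = 0 then 0 else
      ((c : ℝ) + 1) / ((i : ℝ) + (c : ℝ) + 1) with hq
    set B : Matrix (Fin (n + 1)) (Fin (n + 1)) ℝ :=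
      Matrix.of fun i j => A i j - q i * A 0 j with hB
    have hAB : A.det = B.det := by
      refine Matrix.det_eq_of_forall_row_eq_smul_add_const q 0 (by simp [hq]) ?_
      intro i j
      simp [hB, hq]
    set D : Matrix (Fin n) (Fin n) ℝ :=
      Matrix.of fun i j => 1 / ((i : ℝ) + (j : ℝ) + ((c + 2 : ℕ) : ℝ) + 1) with hD
    set r : Fin n → ℝ := fun i => ((i : ℝ) + 1) / ((i : ℝ) + (c : ℝ) + 2) with hr
    have hsub : B.submatrix (Fin.succAbove 0) Fin.succ =
        Matrix.of fun i j => r j * (Matrix.of (fun i j => r i * D i j)) i j := by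
      ext i j
      simp only [hB, hA, hq, hD, hr, Matrix.submatrix_apply, Matrix.of_apply, Fin.zero_succAbove,
        Fin.succ_ne_zero, if_false, Fin.val_succ, Fin.val_zero]
      push_cast
      have := pos i
      have := pos j
      have := pos c
      field_simp
      ring
    have hdet : B.det = 1 / ((c : ℝ) + 1) * ((∏ i, r i) * ((∏ i, r i) * D.det)) := by
      rw [Matrix.det_succ_column_zero, Fin.sum_univ_succ, Finset.sum_eq_zero, add_zero, hsub,
        Matrix.det_mul_row, Matrix.det_mul_column]
      · simp [hB, hA, hq]
      · intro i _
        have : B i.succ 0 = 0 := by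
          simp only [hB, hA, hq, Matrix.of_apply, Fin.succ_ne_zero, if_false, Fin.val_succ,
            Fin.val_zero]
          push_cast
          have := pos i
          have := pos c
          field_simp
          ring
        rw [this]
        ring
    have hprod : ∏ i, r i = (Nat.factorial n : ℝ) * (Nat.factorial (c + 1) : ℝ) /
        (Nat.factorial (n + c + 1) : ℝ) := by
      rw [hr, Fin.prod_univ_eq_prod_range (fun i => ((i : ℝ) + 1) / ((i : ℝ) + (c : ℝ) + 2)) n]
      clear * - pos fpos
      induction n with
      | zero => simp [fpos]
      | succ n ih =>
        rw [Finset.prod_range_succ, ih, show n + 1 + c + 1 = (n + c + 1) + 1 by ring,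
          Nat.factorial_succ (n + c + 1), Nat.factorial_succ n]
        push_cast
        have := fpos (n + c + 1)
        have := pos n
        have := pos c
        field_simp
        ring
    rw [hAB, hdet, hprod, hD, ih (c + 2)]
    have e1 : (∏ i ∈ Finset.range (n + 1), (Nat.factorial (i + c) : ℝ)) *
        (Nat.factorial (n + c + 1) : ℝ) =
        (∏ i ∈ Finset.range n, (Nat.factorial (i + (c + 2)) : ℝ)) *
          (Nat.factorial (c + 1) : ℝ) * (Nat.factorial c : ℝ) := by
      have h := Finset.prod_range_succ (fun i => (Nat.factorial (i + c) : ℝ)) (n + 1)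
      rw [show n + 1 + c = n + c + 1 by ring] at h
      rw [← h, Finset.prod_range_succ', Finset.prod_range_succ']
      simp only [show ∀ i, i + 1 + 1 + c = i + (c + 2) from fun i => by ring,
        show 0 + 1 + c = c + 1 by ring, Nat.zero_add]
    have e2 : ∏ i ∈ Finset.range (n + 1), (Nat.factorial (i + c + (n + 1)) : ℝ) =
        (∏ i ∈ Finset.range n, (Nat.factorial (i + (c + 2) + n) : ℝ)) *
          (Nat.factorial (n + c + 1) : ℝ) := by
      rw [Finset.prod_range_succ']
      simp only [show ∀ i, i + 1 + c + (n + 1) = i + (c + 2) + n from fun i => by ring,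
        show 0 + c + (n + 1) = n + c + 1 by ring]
    have e3 := eq_div_of_mul_eq (fpos (n + c + 1)) e1
    rw [e2, e3, Finset.prod_range_succ (fun i => (Nat.factorial i : ℝ)) n]
    have hne : ∏ i ∈ Finset.range n, (Nat.factorial (i + (c + 2) + n) : ℝ) ≠ 0 :=
      Finset.prod_ne_zero_iff.mpr fun i _ => fpos _
    have h1 := fpos (n + c + 1)
    have h2 := pos c
    rw [Nat.factorial_succ c]
    push_cast
    field_simp

lemma det_hilb_add (k : ℕ) (hk : 0 < k) (s : ℝ) :
    (Matrix.of fun i j : Fin k => 1 / ((i : ℝ) + (j : ℝ) + 3) + s).det =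
      (Matrix.of fun i j : Fin k => 1 / ((i : ℝ) + (j : ℝ) + 3)).det *
        (1 + s * ((k : ℝ) * ((k : ℝ) + 2))) := by
  obtain ⟨v, hv, hsum⟩ := exists_ones_solution k hk
  set C : Matrix (Fin k) (Fin k) ℝ :=
    Matrix.of fun i j : Fin k => 1 / ((i : ℝ) + (j : ℝ) + 3) with hC
  have h : (Matrix.of fun i j : Fin k => 1 / ((i : ℝ) + (j : ℝ) + 3) + s) =
      C * (1 + Matrix.replicateCol Unit v * Matrix.replicateRow Unit (fun _ => s)) := by
    rw [mul_add, mul_one, ← Matrix.mul_assoc]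
    ext i j
    have : (C * Matrix.replicateCol Unit v) i () = 1 := by
      rw [Matrix.mul_apply]
      exact hv i
    rw [Matrix.add_apply, Matrix.mul_apply, Fintype.sum_unique]
    erw [this]
    rw [one_mul]
    rfl
  rw [h, Matrix.det_mul, Matrix.det_one_add_replicateCol_mul_replicateRow]
  congr 2
  rw [← hsum, Finset.mul_sum]
  rfl

lemma Ak_det_reduce (a : ℝ) (n : ℕ) :
    (Ak a (n + 2)).det = a ^ 2 * (1 - a ^ 2) *
      (Matrix.of fun i j : Fin (n + 2) =>
        (1 / 2 : ℝ) * (1 / ((i : ℝ) + (j : ℝ) + 3) + (1 - 2 * a ^ 2))).det := by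
  set A := Ak a (n + 2) with hA
  set q : Fin (n + 4) → ℝ := fun i => if i = 2 then 0 else 1 with hq
  set B : Matrix (Fin (n + 4)) (Fin (n + 4)) ℝ :=
    Matrix.of fun i j => A i j - q i * A 2 j with hB
  have hAB : A.det = B.det := by
    refine Matrix.det_eq_of_forall_row_eq_smul_add_const q 2 (by simp [hq]) ?_
    intro i j
    simp [hB, hq]
  have e2 : ((2 : Fin (n + 4)) : ℕ) = 2 := rfl
  have e1 : ((1 : Fin (n + 4)) : ℕ) = 1 := rfl
  have S1 : Fin.succAbove (1 : Fin (n + 4)) 0 = 0 := rfl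
  have hBv : ∀ i j : Fin (n + 4), B i j = 1 / 2 * gfun a (Sidx' (i : ℕ) + Sidx' (j : ℕ)) -
      (if (i : ℕ) = 2 then 0 else 1) * (1 / 2 * gfun a (Sidx' 2 + Sidx' (j : ℕ))) := by
    intro i j
    simp only [hB, hq, hA, Ak, Matrix.of_apply, e2, Fin.ext_iff]
  have hrow : ∀ j : Fin (n + 4), j ≠ 1 → B 1 j = 0 := by
    rintro ⟨j, hj⟩ h
    rw [hBv, e1]
    rcases j with _ | _ | _ | j
    · simp [Sidx', gfun]
    · exact absurd rfl h
    · simp [Sidx', gfun]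
    · simp [Sidx', gfun]
  have hcol : ∀ i : Fin (n + 4), i ≠ 2 → B i 2 = 0 := by
    rintro ⟨j, hj⟩ h
    rw [hBv, e2]
    rcases j with _ | _ | _ | j
    · simp [Sidx', gfun]
    · simp [Sidx', gfun]
    · exact absurd rfl h
    · simp [Sidx', gfun]
  have h11 : B 1 1 = 1 - a ^ 2 := by
    rw [hBv, e1]
    simp [Sidx', gfun]
  have h22 : B 2 2 = a ^ 2 := by
    rw [hBv, e2]
    simp [Sidx', gfun]
  have hidx : ∀ i : Fin (n + 2),
      Sidx' ((Fin.succAbove (1 : Fin (n + 4)) (Fin.succAbove (1 : Fin (n + 3)) i) : Fin (n + 4)) : ℕ)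
        = ((i : ℕ) + 1, 0) ∧
      ((Fin.succAbove (1 : Fin (n + 4)) (Fin.succAbove (1 : Fin (n + 3)) i) : Fin (n + 4)) : ℕ)
        ≠ 2 := by
    rintro ⟨i, hi⟩
    rcases i with _ | i
    · exact ⟨rfl, (by decide : (0 : ℕ) ≠ 2)⟩
    · have h : ((Fin.succAbove (1 : Fin (n + 4)) (Fin.succAbove (1 : Fin (n + 3)) ⟨i + 1, hi⟩) :
          Fin (n + 4)) : ℕ) = i + 3 := by
        simp [Fin.succAbove, Fin.lt_def]
      rw [h]
      exact ⟨rfl, by omega⟩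
  have hsub : (B.submatrix (Fin.succAbove 1) (Fin.succAbove 1)).submatrix
      (Fin.succAbove 1) (Fin.succAbove 1) = Matrix.of fun i j : Fin (n + 2) =>
        (1 / 2 : ℝ) * (1 / ((i : ℝ) + (j : ℝ) + 3) + (1 - 2 * a ^ 2)) := by
    ext i j
    rw [Matrix.submatrix_apply, Matrix.submatrix_apply, hBv, if_neg (hidx i).2, (hidx i).1,
      (hidx j).1, Matrix.of_apply]
    have g1 : gfun a (((i : ℕ) + 1, 0) + ((j : ℕ) + 1, 0)) =
        ((((i : ℕ) + (j : ℕ) + 1 : ℕ) : ℝ) + 3) / ((((i : ℕ) + (j : ℕ) + 1 : ℕ) : ℝ) + 2) := by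
      rw [show (((i : ℕ) + 1, 0) + ((j : ℕ) + 1, 0) : ℕ × ℕ) = (((i : ℕ) + (j : ℕ) + 1) + 1, 0) by
        ext <;> simp; ring]
      rfl
    have g2 : gfun a (Sidx' 2 + ((j : ℕ) + 1, 0)) = 2 * a ^ 2 := by
      rw [show (Sidx' 2 + ((j : ℕ) + 1, 0) : ℕ × ℕ) = (((j : ℕ) + 1) + 1, 0 + 1) by
        ext <;> simp [Sidx']; ring]
      rfl
    rw [g1, g2]
    push_cast
    have : (0 : ℝ) ≤ (i : ℕ) := Nat.cast_nonneg _
    have : (0 : ℝ) ≤ (j : ℕ) := Nat.cast_nonneg _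
    field_simp
    ring
  have hs12 : Fin.succAbove (1 : Fin (n + 4)) 1 = 2 := rfl
  have h1 : B.det = (1 - a ^ 2) * (B.submatrix (Fin.succAbove 1) (Fin.succAbove 1)).det := by
    rw [Matrix.det_succ_row B 1, Finset.sum_eq_single 1]
    · rw [h11, e1]; norm_num
    · intro j _ hj
      rw [hrow j hj]; ring
    · simp
  have h2 : (B.submatrix (Fin.succAbove 1) (Fin.succAbove 1)).det =
      a ^ 2 * ((B.submatrix (Fin.succAbove 1) (Fin.succAbove 1)).submatrix
      (Fin.succAbove 1) (Fin.succAbove 1)).det := by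
    rw [Matrix.det_succ_column _ 1, Finset.sum_eq_single 1]
    · rw [Matrix.submatrix_apply, hs12, h22, Fin.val_one]; norm_num
    · intro j _ hj
      rw [Matrix.submatrix_apply, hs12, hcol]
      · ring
      · rw [← hs12]
        exact fun h => hj (Fin.succAbove_right_injective h)
    · simp
  rw [hAB, h1, h2, hsub]
  ring

lemma prod_fact_Icc (m k : ℕ) (hk : 0 < k) :
    ∏ i ∈ Finset.Icc m (m + k - 1), (Nat.factorial i : ℝ) =
      ∏ i ∈ Finset.range k, (Nat.factorial (i + m) : ℝ) := by
  have : Finset.Icc m (m + k - 1) = Finset.Ico m (m + k) := by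
    ext i; simp only [Finset.mem_Icc, Finset.mem_Ico]; omega
  rw [this, Finset.prod_Ico_eq_prod_range, Nat.add_sub_cancel_left]
  simp only [add_comm]

theorem det_Ak_formula (a : ℝ) (ha : 0 < a) (ha' : a ≤ 1 / Real.sqrt 2)
    (k : ℕ) (hk : 2 ≤ k) :
    (Ak a k).det =
      akConst k * (a ^ 2 * (1 - a ^ 2) *
        (((k : ℝ) + 1) ^ 2 / (2 * (k : ℝ) * ((k : ℝ) + 2)) - a ^ 2)) := by
  obtain ⟨n, rfl⟩ := Nat.exists_eq_add_of_le' hk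
  have hM : (Matrix.of fun i j : Fin (n + 2) =>
        (1 / 2 : ℝ) * (1 / ((i : ℝ) + (j : ℝ) + 3) + (1 - 2 * a ^ 2))) =
      (1 / 2 : ℝ) • (Matrix.of fun i j : Fin (n + 2) =>
        1 / ((i : ℝ) + (j : ℝ) + 3) + (1 - 2 * a ^ 2)) := by
    ext i j; rfl
  have hH := det_hilb (n + 2) 2
  simp only [show ∀ i j : Fin (n + 2), (i : ℝ) + (j : ℝ) + ((2 : ℕ) : ℝ) + 1
    = (i : ℝ) + (j : ℝ) + 3 from fun i j => by push_cast; ring] at hH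
  have p1 : ∏ i ∈ Finset.Icc 1 (n + 2 - 1), (Nat.factorial i : ℝ) =
      ∏ i ∈ Finset.range (n + 2), (Nat.factorial i : ℝ) := by
    have h := prod_fact_Icc 1 (n + 1) (by omega)
    rw [show 1 + (n + 1) - 1 = n + 2 - 1 by omega] at h
    rw [h, Finset.prod_range_succ' _ (n + 1)]
    simp
  have p2 := prod_fact_Icc 2 (n + 2) (by omega)
  have p3 := prod_fact_Icc (n + 2 + 2) (n + 2) (by omega)
  rw [show 2 + (n + 2) - 1 = n + 2 + 1 by omega] at p2
  rw [show n + 2 + 2 + (n + 2) - 1 = 2 * (n + 2) + 1 by omega] at p3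
  simp only [show ∀ i, i + (n + 2 + 2) = i + 2 + (n + 2) from fun i => by ring] at p3
  rw [Ak_det_reduce, hM, Matrix.det_smul, det_hilb_add _ (by omega), hH, akConst, p1, p2, p3,
    Fintype.card_fin, show n + 2 - 1 = n + 1 by omega]
  have hne : ∏ i ∈ Finset.range (n + 2), (Nat.factorial (i + 2 + (n + 2)) : ℝ) ≠ 0 :=
    Finset.prod_ne_zero_iff.mpr fun i _ => by exact_mod_cast Nat.factorial_ne_zero _
  push_cast
  have : (0 : ℝ) ≤ n := Nat.cast_nonneg n
  generalize (∏ i ∈ Finset.range (n + 2), (Nat.factorial (i + 2 + (n + 2)) : ℝ)) = X at *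
  generalize (∏ i ∈ Finset.range (n + 2), (Nat.factorial (i + 2) : ℝ)) = Y at *
  generalize (∏ i ∈ Finset.range (n + 2), (Nat.factorial i : ℝ)) = Z at *
  rw [pow_succ (1 / 2 : ℝ), one_div, inv_pow]
  field_simp
  ring
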